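/- arXiv:math/0305124 — 5 statements merged into one kernel-verified Lean document; each statement's English description precedes it below -/
import Mathlib

section
/- For all indices p, q, j, k ∈ {1,…,7} one has Σ_{i=1}^{7} ε_{ipq} ε_{ijk} = ε_{pqjk} + δ_{pj} δ_{qk} − δ_{pk} δ_{qj}. -/
open scoped BigOperators Matrix

noncomputable section

namespace G2

/-- The standard basis vector `e i` of `ℝ⁷`. -/
def e (i : Fin 7) : Fin 7 → ℝ := fun j => if j = i then 1 else 0

/-- The 3-form `e^a ∧ e^b ∧ e^c` (determinant convention), evaluated on `(x, y, z)`. -/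
def w3 (a b c : Fin 7) (x y z : Fin 7 → ℝ) : ℝ :=
  x a * (y b * z c - y c * z b) - x b * (y a * z c - y c * z a)
    + x c * (y a * z b - y b * z a)

/-- The 4-form `e^a ∧ e^b ∧ e^c ∧ e^d`, evaluated on `(x, y, z, w)`. -/
def w4 (a b c d : Fin 7) (x y z w : Fin 7 → ℝ) : ℝ :=
  Matrix.det !![x a, x b, x c, x d; y a, y b, y c, y d;
                z a, z b, z c, z d; w a, w b, w c, w d]

/-- The fundamental `G₂` 3-form
`φ = e^{123}+e^{145}+e^{167}+e^{246}-e^{257}-e^{347}-e^{356}` (indices shifted to start at 0),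
as a trilinear alternating function of three vectors. -/
def phi (x y z : Fin 7 → ℝ) : ℝ :=
  w3 0 1 2 x y z + w3 0 3 4 x y z + w3 0 5 6 x y z + w3 1 3 5 x y z
    - w3 1 4 6 x y z - w3 2 3 6 x y z - w3 2 4 5 x y z

/-- The 4-form `ψ = *φ = e^{4567}+e^{2367}+e^{2345}+e^{1357}-e^{1346}-e^{1256}-e^{1247}`
(indices shifted to start at 0), as a function of four vectors. -/
def psi (x y z w : Fin 7 → ℝ) : ℝ :=
  w4 3 4 5 6 x y z w + w4 1 2 5 6 x y z w + w4 1 2 3 4 x y z w + w4 0 2 4 6 x y z w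
    - w4 0 2 3 5 x y z w - w4 0 1 4 5 x y z w - w4 0 1 3 6 x y z w

/-- `ε_{ijk} = φ(e_i, e_j, e_k)`. -/
def eps (i j k : Fin 7) : ℝ := phi (e i) (e j) (e k)

/-- `ε_{ijkl} = ψ(e_i, e_j, e_k, e_l)`. -/
def eps4 (i j k l : Fin 7) : ℝ := psi (e i) (e j) (e k) (e l)

/-- The volume form `e^1 ∧ ⋯ ∧ e^7`, evaluated on a 7-tuple of vectors. -/
def vol (v : Fin 7 → (Fin 7 → ℝ)) : ℝ := Matrix.det (Matrix.of fun i j => v i j)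

/-- The matrix `[v]` with `[v]_{ij} = Σ_k ε_{ijk} v_k`. -/
def bracket (v : Fin 7 → ℝ) : Matrix (Fin 7) (Fin 7) ℝ :=
  Matrix.of fun i j => ∑ k : Fin 7, eps i j k * v k

/-- The vector `⟨A⟩` with `⟨A⟩_i = Σ_{j,k} ε_{ijk} A_{jk}`. -/
def angle (A : Matrix (Fin 7) (Fin 7) ℝ) : Fin 7 → ℝ :=
  fun i => ∑ j : Fin 7, ∑ k : Fin 7, eps i j k * A j k

/-- Wedge product of two 2-forms (determinant convention), evaluated on four vectors. -/
def wedge22 (A B : (Fin 7 → ℝ) → (Fin 7 → ℝ) → ℝ) (v : Fin 4 → (Fin 7 → ℝ)) : ℝ :=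
  (1 / 4 : ℝ) * ∑ σ : Equiv.Perm (Fin 4),
    ((Equiv.Perm.sign σ : ℤ) : ℝ) * (A (v (σ 0)) (v (σ 1)) * B (v (σ 2)) (v (σ 3)))

/-- Wedge product of three 2-forms (determinant convention), evaluated on six vectors. -/
def wedge222 (A B C : (Fin 7 → ℝ) → (Fin 7 → ℝ) → ℝ) (v : Fin 6 → (Fin 7 → ℝ)) : ℝ :=
  (1 / 8 : ℝ) * ∑ σ : Equiv.Perm (Fin 6),
    ((Equiv.Perm.sign σ : ℤ) : ℝ) *
      (A (v (σ 0)) (v (σ 1)) * B (v (σ 2)) (v (σ 3)) * C (v (σ 4)) (v (σ 5)))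

/-- Wedge product of two 2-forms and a 3-form (determinant convention),
evaluated on seven vectors. -/
def wedge223 (A B : (Fin 7 → ℝ) → (Fin 7 → ℝ) → ℝ)
    (C : (Fin 7 → ℝ) → (Fin 7 → ℝ) → (Fin 7 → ℝ) → ℝ)
    (v : Fin 7 → (Fin 7 → ℝ)) : ℝ :=
  (1 / 24 : ℝ) * ∑ σ : Equiv.Perm (Fin 7),
    ((Equiv.Perm.sign σ : ℤ) : ℝ) *
      (A (v (σ 0)) (v (σ 1)) * B (v (σ 2)) (v (σ 3)) * C (v (σ 4)) (v (σ 5)) (v (σ 6)))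

/-- The map `i_φ : S²(ℝ⁷)* → Λ³(ℝ⁷)*`,
`i_φ(h) = Σ_{i,j,k,l} ε_{ikl} h_{ij} e^j ∧ e^k ∧ e^l`, evaluated on `(x, y, z)`. -/
def iphi (h : Fin 7 → Fin 7 → ℝ) (x y z : Fin 7 → ℝ) : ℝ :=
  ∑ i : Fin 7, ∑ j : Fin 7, ∑ k : Fin 7, ∑ l : Fin 7, eps i k l * h i j * w3 j k l x y z

/-- Integer determinants of standard basis vectors, expanded with early exits. -/
def D1 (a x : Fin 7) : ℤ := if a = x then 1 else 0

def D2 (a b x y : Fin 7) : ℤ :=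
  (if a = x then D1 b y else 0) - (if b = x then D1 a y else 0)

def D3 (a b c x y z : Fin 7) : ℤ :=
  (if a = x then D2 b c y z else 0) - (if b = x then D2 a c y z else 0)
    + (if c = x then D2 a b y z else 0)

def D4 (a b c d x y z w : Fin 7) : ℤ :=
  (if a = x then D3 b c d y z w else 0) - (if b = x then D3 a c d y z w else 0)
    + (if c = x then D3 a b d y z w else 0) - (if d = x then D3 a b c y z w else 0)

def epsZ (x y z : Fin 7) : ℤ :=
  D3 0 1 2 x y z + D3 0 3 4 x y z + D3 0 5 6 x y z + D3 1 3 5 x y z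
    - D3 1 4 6 x y z - D3 2 3 6 x y z - D3 2 4 5 x y z

def eps4Z (x y z w : Fin 7) : ℤ :=
  D4 3 4 5 6 x y z w + D4 1 2 5 6 x y z w + D4 1 2 3 4 x y z w + D4 0 2 4 6 x y z w
    - D4 0 2 3 5 x y z w - D4 0 1 4 5 x y z w - D4 0 1 3 6 x y z w

theorem D1_cast (a x : Fin 7) : (D1 a x : ℝ) = e x a := by
  simp [D1, e]

theorem D2_cast (a b x y : Fin 7) : (D2 a b x y : ℝ) = e x a * e y b - e x b * e y a := by
  simp only [D2, Int.cast_sub, Int.cast_ite, Int.cast_zero, D1_cast]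
  simp only [e, ite_mul, one_mul, zero_mul]

theorem D3_cast (a b c x y z : Fin 7) : (D3 a b c x y z : ℝ) = w3 a b c (e x) (e y) (e z) := by
  have h (i : Fin 7) (t : ℝ) : (if i = x then t else 0) = e x i * t := by simp [e]
  simp only [D3, Int.cast_sub, Int.cast_add, Int.cast_ite, Int.cast_zero, D2_cast, h, w3]

theorem D4_cast (a b c d x y z w : Fin 7) :
    (D4 a b c d x y z w : ℝ) = w4 a b c d (e x) (e y) (e z) (e w) := by
  have h (i : Fin 7) (t : ℝ) : (if i = x then t else 0) = e x i * t := by simp [e]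
  simp only [D4, Int.cast_sub, Int.cast_add, Int.cast_ite, Int.cast_zero, D3_cast, h]
  simp [w4, w3, Matrix.det_succ_row_zero, Fin.sum_univ_succ, Fin.succAbove]
  ring

theorem eps_cast (x y z : Fin 7) : eps x y z = (epsZ x y z : ℝ) := by
  simp only [eps, phi, epsZ, Int.cast_sub, Int.cast_add, D3_cast]

theorem eps4_cast (x y z w : Fin 7) : eps4 x y z w = (eps4Z x y z w : ℝ) := by
  simp only [eps4, psi, eps4Z, Int.cast_sub, Int.cast_add, D4_cast]

theorem key : ∀ p q j k : Fin 7,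
    epsZ 0 p q * epsZ 0 j k + epsZ 1 p q * epsZ 1 j k + epsZ 2 p q * epsZ 2 j k
      + epsZ 3 p q * epsZ 3 j k + epsZ 4 p q * epsZ 4 j k + epsZ 5 p q * epsZ 5 j k
      + epsZ 6 p q * epsZ 6 j k
      = eps4Z p q j k + (if p = j then 1 else 0) * (if q = k then 1 else 0)
          - (if p = k then 1 else 0) * (if q = j then 1 else 0) := by
  decide +kernel

/-- `Σ_i ε_{ipq} ε_{ijk} = ε_{pqjk} + δ_{pj} δ_{qk} − δ_{pk} δ_{qj}`. -/
theorem eps_eps_expansion (p q j k : Fin 7) :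
    ∑ i : Fin 7, eps i p q * eps i j k
      = eps4 p q j k + (if p = j then (1 : ℝ) else 0) * (if q = k then (1 : ℝ) else 0)
          - (if p = k then (1 : ℝ) else 0) * (if q = j then (1 : ℝ) else 0) := by
  have h := congrArg (Int.cast : ℤ → ℝ) (key p q j k)
  push_cast at h
  simp only [eps_cast, eps4_cast, Fin.sum_univ_seven]
  exact h

end G2

end
end

section
/- The linear subspace of 7×7 real matrices consisting of all skew-symmetric matrices A satisfying Σ_{j,k=1}^{7} ε_{ijk} A_{jk} = 0 for every i ∈ {1,…,7} has dimension 14. -/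
open scoped BigOperators Matrix

noncomputable section

namespace G2

/-- The Lie algebra `𝔤₂`: skew-symmetric `7×7` matrices `A` with
`Σ_{j,k} ε_{ijk} A_{jk} = 0` for every `i`, as a linear subspace of the `7×7` matrices. -/
def g2Alg : Submodule ℝ (Matrix (Fin 7) (Fin 7) ℝ) where
  carrier := {A | Aᵀ = -A ∧ ∀ i : Fin 7, ∑ j : Fin 7, ∑ k : Fin 7, eps i j k * A j k = 0}
  add_mem' := by
    rintro A B ⟨hA1, hA2⟩ ⟨hB1, hB2⟩
    refine ⟨by rw [Matrix.transpose_add, hA1, hB1, neg_add], fun i => ?_⟩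
    have h : ∀ j k : Fin 7, eps i j k * (A + B) j k
        = eps i j k * A j k + eps i j k * B j k := by
      intro j k; simp [Matrix.add_apply, mul_add]
    simp only [h, Finset.sum_add_distrib, hA2 i, hB2 i, add_zero]
  zero_mem' := by
    refine ⟨by simp, fun i => ?_⟩
    simp
  smul_mem' := by
    rintro c A ⟨hA1, hA2⟩
    refine ⟨by rw [Matrix.transpose_smul, hA1, smul_neg], fun i => ?_⟩
    have h : ∀ j k : Fin 7, eps i j k * (c • A) j k = c * (eps i j k * A j k) := by
      intro j k; simp [Matrix.smul_apply, smul_eq_mul]; ring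
    simp only [h, ← Finset.mul_sum, hA2 i, mul_zero]

/-- Contraction of a simple 3-form against a matrix. -/
theorem sum_w3 (a b c i : Fin 7) (A : Matrix (Fin 7) (Fin 7) ℝ) :
    ∑ j : Fin 7, ∑ k : Fin 7, w3 a b c (e i) (e j) (e k) * A j k
      = e i a * (A b c - A c b) - e i b * (A a c - A c a) + e i c * (A a b - A b a) := by
  have h : ∀ p q : Fin 7, ∑ j : Fin 7, ∑ k : Fin 7, (e j p * e k q) * A j k = A p q := by
    intro p q
    simp [e]
  have h2 : ∀ j k : Fin 7, w3 a b c (e i) (e j) (e k) * A j k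
      = e i a * ((e j b * e k c) * A j k) - e i a * ((e j c * e k b) * A j k)
        - e i b * ((e j a * e k c) * A j k) + e i b * ((e j c * e k a) * A j k)
        + e i c * ((e j a * e k b) * A j k) - e i c * ((e j b * e k a) * A j k) := by
    intro j k
    simp only [w3]
    ring
  simp only [h2, Finset.sum_add_distrib, Finset.sum_sub_distrib, ← Finset.mul_sum, h]
  ring

theorem sum_eps (i : Fin 7) (A : Matrix (Fin 7) (Fin 7) ℝ) (hA : Aᵀ = -A) :
    ∑ j : Fin 7, ∑ k : Fin 7, eps i j k * A j k
      = 2 * (![A 1 2 + A 3 4 + A 5 6, -A 0 2 + A 3 5 - A 4 6, A 0 1 - A 3 6 - A 4 5,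
          -A 0 4 - A 1 5 + A 2 6, A 0 3 + A 1 6 + A 2 5, -A 0 6 + A 1 3 - A 2 4,
          A 0 5 - A 1 4 - A 2 3] i) := by
  have hs : ∀ p q, A q p = - A p q := fun p q => by
    simpa using congrFun (congrFun hA p) q
  have h2 : ∀ j k : Fin 7, eps i j k * A j k
      = w3 0 1 2 (e i) (e j) (e k) * A j k + w3 0 3 4 (e i) (e j) (e k) * A j k
        + w3 0 5 6 (e i) (e j) (e k) * A j k + w3 1 3 5 (e i) (e j) (e k) * A j k
        - w3 1 4 6 (e i) (e j) (e k) * A j k - w3 2 3 6 (e i) (e j) (e k) * A j k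
        - w3 2 4 5 (e i) (e j) (e k) * A j k := by
    intro j k
    simp only [eps, phi]
    ring
  simp only [h2, Finset.sum_add_distrib, Finset.sum_sub_distrib, sum_w3]
  rw [hs 0 1, hs 0 2, hs 0 3, hs 0 4, hs 0 5, hs 0 6, hs 1 2, hs 1 3, hs 1 4, hs 1 5, hs 1 6,
    hs 2 3, hs 2 4, hs 2 5, hs 2 6, hs 3 4, hs 3 5, hs 3 6, hs 4 5, hs 4 6, hs 5 6]
  fin_cases i <;> simp [e] <;> ring

theorem mem_g2Alg (A : Matrix (Fin 7) (Fin 7) ℝ) :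
    A ∈ g2Alg ↔ Aᵀ = -A ∧ ∀ i : Fin 7, ![A 1 2 + A 3 4 + A 5 6, -A 0 2 + A 3 5 - A 4 6,
          A 0 1 - A 3 6 - A 4 5,
          -A 0 4 - A 1 5 + A 2 6, A 0 3 + A 1 6 + A 2 5, -A 0 6 + A 1 3 - A 2 4,
          A 0 5 - A 1 4 - A 2 3] i = 0 := by
  change (Aᵀ = -A ∧ ∀ i : Fin 7, ∑ j : Fin 7, ∑ k : Fin 7, eps i j k * A j k = 0) ↔ _
  refine and_congr_right fun hA => forall_congr' fun i => ?_
  rw [sum_eps i A hA]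
  simp

/-- Upper triangular part of the general element of the algebra. -/
def up (x : Fin 14 → ℝ) : Matrix (Fin 7) (Fin 7) ℝ :=
  !![0, x 4 + x 5, x 2 - x 3, -x 8 - x 9, x 7 - x 6, x 12 + x 13, x 10 - x 11;
     0, 0, -x 0 - x 1, x 10, x 12, x 6, x 8;
     0, 0, 0, x 13, x 11, x 9, x 7;
     0, 0, 0, 0, x 0, x 2, x 4;
     0, 0, 0, 0, 0, x 5, x 3;
     0, 0, 0, 0, 0, 0, x 1;
     0, 0, 0, 0, 0, 0, 0]

theorem up_mem (x : Fin 14 → ℝ) : up x - (up x)ᵀ ∈ g2Alg := by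
  rw [mem_g2Alg]
  refine ⟨by simp, fun i => ?_⟩
  fin_cases i <;> simp [up] <;> ring

/-- Coordinates on the algebra. -/
def coords : g2Alg ≃ₗ[ℝ] (Fin 14 → ℝ) where
  toFun A := ![A.1 3 4, A.1 5 6, A.1 3 5, A.1 4 6, A.1 3 6, A.1 4 5, A.1 1 5, A.1 2 6, A.1 1 6,
    A.1 2 5, A.1 1 3, A.1 2 4, A.1 1 4, A.1 2 3]
  map_add' A B := by
    ext i
    fin_cases i <;> rfl
  map_smul' c A := by
    ext i
    fin_cases i <;> rfl
  invFun x := ⟨up x - (up x)ᵀ, up_mem x⟩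
  left_inv := by
    rintro ⟨A, hA⟩
    obtain ⟨h1, h2⟩ := (mem_g2Alg A).1 hA
    have hs : ∀ p q, A q p = - A p q := fun p q => by
      simpa using congrFun (congrFun h1 p) q
    have a0 := h2 0
    have a1 := h2 1
    have a2 := h2 2
    have a3 := h2 3
    have a4 := h2 4
    have a5 := h2 5
    have a6 := h2 6
    simp at a0 a1 a2 a3 a4 a5 a6
    apply Subtype.ext
    ext i j
    have hij := hs i j
    fin_cases i <;> fin_cases j <;> simp [up] at hij ⊢ <;> linarith
  right_inv := by
    intro x
    ext i
    fin_cases i <;> simp [up]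

/-- the subspace `𝔤₂` has dimension `14`. -/
theorem g2Alg_finrank : Module.finrank ℝ g2Alg = 14 := by
  rw [coords.finrank_eq]
  simp

end G2

end
end

section
/- An alternating 2-form β on ℝ⁷ satisfies Σ_{j,k=1}^{7} ε_{ijk} β(e_j,e_k) = 0 for every i ∈ {1,…,7} if and only if for every alternating 2-form η on ℝ⁷ one has η ∧ β ∧ φ = −⟨η,β⟩ · vol, where ⟨η,β⟩ := Σ_{a<b} η(e_a,e_b) β(e_a,e_b). (This characterizes the 14-dimensional summand Λ²₁₄, on which wedging with φ acts as −1 times the Hodge star.) -/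
open scoped BigOperators Matrix

noncomputable section

namespace G2

/-- Lazy multiplication by the sign of `y - x`. -/
def ms (x y : ℕ) (r : ℤ) : ℤ := if x < y then r else if y < x then -r else 0

/-- Sign of the sequence `(a,b,c,d,i,j,k)` (zero if it has repetitions). -/
def s7 (a b c d i j k : ℕ) : ℤ :=
  ms a b <| ms a c <| ms b c <| ms a d <| ms b d <| ms c d <| ms a i <| ms b i <| ms c i <|
  ms d i <| ms a j <| ms b j <| ms c j <| ms d j <| ms i j <| ms a k <| ms b k <| ms c k <|
  ms d k <| ms i k <| ms j k 1

/-- Antisymmetrization of `s7` in the last three slots. -/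
def t7 (a b c d i j k : ℕ) : ℤ :=
  s7 a b c d i j k - s7 a b c d i k j - s7 a b c d j i k + s7 a b c d j k i
    + s7 a b c d k i j - s7 a b c d k j i

/-- Coefficients of the wedge product with `φ`. -/
def cZ (a b c d : ℕ) : ℤ :=
  t7 a b c d 0 1 2 + t7 a b c d 0 3 4 + t7 a b c d 0 5 6 + t7 a b c d 1 3 5
    - t7 a b c d 1 4 6 - t7 a b c d 2 3 6 - t7 a b c d 2 4 5

/-- Integer Kronecker delta. -/
def dZ (i j : ℕ) : ℤ := if j = i then 1 else 0

/-- Integer version of `w3` on basis vectors. -/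
def wZ (a b c x y z : ℕ) : ℤ :=
  dZ x a * (dZ y b * dZ z c - dZ y c * dZ z b) - dZ x b * (dZ y a * dZ z c - dZ y c * dZ z a)
    + dZ x c * (dZ y a * dZ z b - dZ y b * dZ z a)

/-- Integer version of `eps`. -/
def eZ (x y z : ℕ) : ℤ :=
  wZ 0 1 2 x y z + wZ 0 3 4 x y z + wZ 0 5 6 x y z + wZ 1 3 5 x y z
    - wZ 1 4 6 x y z - wZ 2 3 6 x y z - wZ 2 4 5 x y z

/-- Sign of the only possible term. -/
def lZ (p q r s x y z : ℕ) (t : ℤ) : ℤ :=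
  if x = p then (if y = q then (if z = r then 1 else t) else
      if y = r then (if z = q then -1 else t) else t) else
  if x = q then (if y = r then (if z = p then 1 else t) else
      if y = p then (if z = r then -1 else t) else t) else
  if x = r then (if y = p then (if z = q then 1 else t) else
      if y = q then (if z = p then -1 else t) else t) else if s = 0 then t else t

/-- Fast integer version of `eps`. -/
def fZ (x y z : ℕ) : ℤ :=
  lZ 0 1 2 0 x y z <| lZ 0 3 4 0 x y z <| lZ 0 5 6 0 x y z <| lZ 1 3 5 0 x y z <|
  lZ 1 6 4 0 x y z <| lZ 2 6 3 0 x y z <| lZ 2 5 4 0 x y z 0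

theorem eZ_eq : ∀ x y z : Fin 7, eZ x y z = fZ x y z := by
  decide +kernel

theorem cZ_eq : ∀ a b c d : Fin 7, cZ a b c d =
    6 * ((fZ 0 a b * fZ 0 c d + fZ 1 a b * fZ 1 c d + fZ 2 a b * fZ 2 c d + fZ 3 a b * fZ 3 c d
      + fZ 4 a b * fZ 4 c d + fZ 5 a b * fZ 5 c d + fZ 6 a b * fZ 6 c d)
      - (if a = c then if b = d then 1 else 0 else 0)
      + (if a = d then if b = c then 1 else 0 else 0)) := by
  decide +kernel

theorem e_eq (i j : Fin 7) : e i j = (dZ i j : ℝ) := by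
  simp [e, dZ, Fin.ext_iff]

theorem eps_eq (x y z : Fin 7) : eps x y z = (fZ x y z : ℝ) := by
  rw [← eZ_eq]
  simp only [eps, phi, w3, e_eq, eZ, wZ]
  push_cast
  rfl

theorem cZ_eq' (a b c d : Fin 7) : (cZ a b c d : ℝ) =
    6 * ((∑ i : Fin 7, eps i a b * eps i c d)
      - (if a = c then if b = d then 1 else 0 else 0)
      + (if a = d then if b = c then 1 else 0 else 0)) := by
  rw [cZ_eq]
  simp only [eps_eq, Fin.sum_univ_seven]
  push_cast
  rfl

theorem ms_eq (x y : ℕ) (r : ℤ) : ms x y r = ms x y 1 * r := by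
  unfold ms; split_ifs <;> simp

theorem s7_eq (f : Fin 7 → Fin 7) :
    s7 (f 0) (f 1) (f 2) (f 3) (f 4) (f 5) (f 6) =
      ∏ j, ∏ i ∈ Finset.Iio j, ms (f i) (f j) 1 := by
  have h0 : Finset.Iio (0 : Fin 7) = ∅ := by decide
  have h1 : Finset.Iio (1 : Fin 7) = {0} := by decide
  have h2 : Finset.Iio (2 : Fin 7) = {0, 1} := by decide
  have h3 : Finset.Iio (3 : Fin 7) = {0, 1, 2} := by decide
  have h4 : Finset.Iio (4 : Fin 7) = {0, 1, 2, 3} := by decide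
  have h5 : Finset.Iio (5 : Fin 7) = {0, 1, 2, 3, 4} := by decide
  have h6 : Finset.Iio (6 : Fin 7) = {0, 1, 2, 3, 4, 5} := by decide
  rw [Fin.prod_univ_seven, h0, h1, h2, h3, h4, h5, h6]
  unfold s7
  iterate 20 rw [ms_eq _ _ (ms _ _ _)]
  simp
  ring

theorem det_f (v : Fin 7 → Fin 7 → ℝ) (f : Fin 7 → Fin 7) :
    Matrix.det (Matrix.of fun i j => v i (f j)) =
      (s7 (f 0) (f 1) (f 2) (f 3) (f 4) (f 5) (f 6) : ℝ) * vol v := by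
  rw [s7_eq]
  by_cases hf : Function.Injective f
  · have hb : Function.Bijective f := Finite.injective_iff_bijective.mp hf
    obtain ⟨σ, rfl⟩ : ∃ σ : Equiv.Perm (Fin 7), (σ : Fin 7 → Fin 7) = f :=
      ⟨Equiv.ofBijective f hb, rfl⟩
    have h := Matrix.det_permute' σ (Matrix.of fun i j => v i j)
    have hs : ((Equiv.Perm.sign σ : ℤˣ) : ℤ) =
        ∏ j, ∏ i ∈ Finset.Iio j, ms (σ i) (σ j) 1 := by
      rw [Equiv.Perm.sign_eq_prod_prod_Iio]
      push_cast
      refine Finset.prod_congr rfl fun j _ => Finset.prod_congr rfl fun i hi => ?_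
      have hij : σ i ≠ σ j := fun hh => (Finset.mem_Iio.mp hi).ne (σ.injective hh)
      unfold ms
      rcases lt_or_gt_of_ne hij with h | h
      · have h2 : (σ i : ℕ) < σ j := h
        simp [h, h2]
      · have h2 : (σ j : ℕ) < σ i := h
        simp [h, h2, h.not_gt, h2.not_gt]
    rw [← hs, vol, ← h]
    rfl
  · obtain ⟨i, j, hij, hne⟩ : ∃ i j, f i = f j ∧ i < j := by
      simp only [Function.Injective, not_forall] at hf
      obtain ⟨i, j, h, hn⟩ := hf
      rcases lt_or_gt_of_ne hn with h' | h'
      · exact ⟨i, j, h, h'⟩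
      · exact ⟨j, i, h.symm, h'⟩
    rw [Matrix.det_zero_of_column_eq hne.ne (fun k => by simp [hij])]
    have : ∏ j, ∏ i ∈ Finset.Iio j, ms (f i) (f j) 1 = 0 := by
      refine Finset.prod_eq_zero (Finset.mem_univ j) ?_
      refine Finset.prod_eq_zero (Finset.mem_Iio.mpr hne) ?_
      simp [ms, hij]
    rw [this]; simp

theorem sum_S (v : Fin 7 → Fin 7 → ℝ) (a b c d i j k : Fin 7) :
    (s7 a b c d i j k : ℝ) * vol v = ∑ σ : Equiv.Perm (Fin 7),
      ((Equiv.Perm.sign σ : ℤ) : ℝ) * (v (σ 0) a * v (σ 1) b * (v (σ 2) c * v (σ 3) d) *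
        (v (σ 4) i * v (σ 5) j * v (σ 6) k)) := by
  have h := det_f v ![a, b, c, d, i, j, k]
  have h' : s7 a b c d i j k = s7 (![a, b, c, d, i, j, k] 0) (![a, b, c, d, i, j, k] 1)
    (![a, b, c, d, i, j, k] 2) (![a, b, c, d, i, j, k] 3) (![a, b, c, d, i, j, k] 4)
    (![a, b, c, d, i, j, k] 5) (![a, b, c, d, i, j, k] 6) := rfl
  rw [h', ← h, Matrix.det_apply']
  refine Finset.sum_congr rfl fun σ _ => ?_
  rw [Fin.prod_univ_seven]
  simp only [Matrix.of_apply]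
  change _ * (v (σ 0) a * v (σ 1) b * v (σ 2) c * v (σ 3) d * v (σ 4) i * v (σ 5) j
    * v (σ 6) k) = _
  ring

theorem sum_T (v : Fin 7 → Fin 7 → ℝ) (a b c d i j k : Fin 7) :
    (t7 a b c d i j k : ℝ) * vol v = ∑ σ : Equiv.Perm (Fin 7),
      ((Equiv.Perm.sign σ : ℤ) : ℝ) * (v (σ 0) a * v (σ 1) b * (v (σ 2) c * v (σ 3) d) *
        w3 i j k (v (σ 4)) (v (σ 5)) (v (σ 6))) := by
  unfold t7
  push_cast
  simp only [add_mul, sub_mul, sum_S, ← Finset.sum_add_distrib, ← Finset.sum_sub_distrib]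
  refine Finset.sum_congr rfl fun σ _ => ?_
  unfold w3
  ring

theorem sum_C (v : Fin 7 → Fin 7 → ℝ) (a b c d : Fin 7) :
    (cZ a b c d : ℝ) * vol v = ∑ σ : Equiv.Perm (Fin 7),
      ((Equiv.Perm.sign σ : ℤ) : ℝ) * (v (σ 0) a * v (σ 1) b * (v (σ 2) c * v (σ 3) d) *
        phi (v (σ 4)) (v (σ 5)) (v (σ 6))) := by
  have h1 := sum_T v a b c d 0 1 2
  have h2 := sum_T v a b c d 0 3 4
  have h3 := sum_T v a b c d 0 5 6
  have h4 := sum_T v a b c d 1 3 5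
  have h5 := sum_T v a b c d 1 4 6
  have h6 := sum_T v a b c d 2 3 6
  have h7 := sum_T v a b c d 2 4 5
  have hc : (cZ a b c d : ℝ) * vol v =
      (t7 a b c d (0 : Fin 7) (1 : Fin 7) (2 : Fin 7) : ℝ) * vol v
      + (t7 a b c d (0 : Fin 7) (3 : Fin 7) (4 : Fin 7) : ℝ) * vol v
      + (t7 a b c d (0 : Fin 7) (5 : Fin 7) (6 : Fin 7) : ℝ) * vol v
      + (t7 a b c d (1 : Fin 7) (3 : Fin 7) (5 : Fin 7) : ℝ) * vol v
      - (t7 a b c d (1 : Fin 7) (4 : Fin 7) (6 : Fin 7) : ℝ) * vol v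
      - (t7 a b c d (2 : Fin 7) (3 : Fin 7) (6 : Fin 7) : ℝ) * vol v
      - (t7 a b c d (2 : Fin 7) (4 : Fin 7) (5 : Fin 7) : ℝ) * vol v := by
    simp only [← add_mul, ← sub_mul]
    congr 1
    unfold cZ
    push_cast
    rfl
  rw [hc, h1, h2, h3, h4, h5, h6, h7]
  simp only [← Finset.sum_add_distrib, ← Finset.sum_sub_distrib]
  refine Finset.sum_congr rfl fun σ _ => ?_
  unfold phi
  ring

theorem form_expand (η : AlternatingMap ℝ (Fin 7 → ℝ) ℝ (Fin 2)) (x y : Fin 7 → ℝ) :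
    η ![x, y] = ∑ p : Fin 7 × Fin 7, η ![e p.1, e p.2] * (x p.1 * y p.2) := by
  have hx : ∀ x : Fin 7 → ℝ, x = ∑ a, x a • e a := by
    intro x; ext j; simp [e, Finset.sum_apply]
  have h1 : ∀ z : Fin 7 → ℝ, η ![x, z] = ∑ a, x a * η ![e a, z] := by
    intro z
    have := map_sum (η.toMultilinearMap.toLinearMap ![0, z] 0) (fun a => x a • e a) Finset.univ
    rw [← hx x] at this
    have hu : ∀ w : Fin 7 → ℝ, Function.update ![0, z] 0 w = ![w, z] := by
      intro w; ext i j; fin_cases i <;> simp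
    simpa [hu] using this
  have h2 : ∀ z : Fin 7 → ℝ, η ![z, y] = ∑ a, y a * η ![z, e a] := by
    intro z
    have := map_sum (η.toMultilinearMap.toLinearMap ![z, 0] 1) (fun a => y a • e a) Finset.univ
    rw [← hx y] at this
    have hu : ∀ w : Fin 7 → ℝ, Function.update ![z, 0] 1 w = ![z, w] := by
      intro w; ext i j; fin_cases i <;> simp
    simpa [hu] using this
  rw [h1, Fintype.sum_prod_type]
  refine Finset.sum_congr rfl fun a _ => ?_
  rw [h2, Finset.mul_sum]
  refine Finset.sum_congr rfl fun b _ => ?_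
  ring

theorem form_swap (η : AlternatingMap ℝ (Fin 7 → ℝ) ℝ (Fin 2)) (x y : Fin 7 → ℝ) :
    η ![y, x] = - η ![x, y] := by
  have h := η.map_swap ![x, y] (i := 0) (j := 1) (by decide)
  rw [← h]
  congr 1
  ext i j; fin_cases i <;> simp

theorem pair_eq (η β : AlternatingMap ℝ (Fin 7 → ℝ) ℝ (Fin 2)) :
    ∑ a : Fin 7, ∑ b : Fin 7, η ![e a, e b] * β ![e a, e b] =
    2 * ∑ a : Fin 7, ∑ b : Fin 7, if a < b then η ![e a, e b] * β ![e a, e b] else 0 := by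
  have hd : ∀ a b : Fin 7, η ![e a, e b] * β ![e a, e b] =
      (if a < b then η ![e a, e b] * β ![e a, e b] else 0) +
      (if b < a then η ![e b, e a] * β ![e b, e a] else 0) := by
    intro a b
    rcases lt_trichotomy a b with h | h | h
    · simp [h, h.not_gt]
    · subst h
      have := form_swap η (e a) (e a)
      have h0 : η ![e a, e a] = 0 := by linarith
      simp [h0]
    · simp [h, h.not_gt, form_swap η (e b) (e a), form_swap β (e b) (e a)]
  rw [Finset.sum_congr rfl fun a _ => Finset.sum_congr rfl fun b _ => hd a b]
  simp only [Finset.sum_add_distrib]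
  rw [Finset.sum_comm (f := fun a b : Fin 7 =>
    if b < a then η ![e b, e a] * β ![e b, e a] else 0)]
  ring

theorem wedge_key (η β : AlternatingMap ℝ (Fin 7 → ℝ) ℝ (Fin 2)) (v : Fin 7 → (Fin 7 → ℝ)) :
    wedge223 (fun x y => η ![x, y]) (fun x y => β ![x, y]) phi v =
      ((1 / 4) * (∑ i : Fin 7, (∑ j : Fin 7, ∑ k : Fin 7, eps i j k * η ![e j, e k]) *
        (∑ j : Fin 7, ∑ k : Fin 7, eps i j k * β ![e j, e k]))
      - ∑ a : Fin 7, ∑ b : Fin 7, if a < b then η ![e a, e b] * β ![e a, e b] else 0)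
        * vol v := by
  have h1 : wedge223 (fun x y => η ![x, y]) (fun x y => β ![x, y]) phi v =
      (1 / 24) * ∑ p : Fin 7 × Fin 7, ∑ q : Fin 7 × Fin 7,
        η ![e p.1, e p.2] * β ![e q.1, e q.2] * ((cZ p.1 p.2 q.1 q.2 : ℝ) * vol v) := by
    unfold wedge223
    congr 1
    simp only [sum_C, Finset.mul_sum]
    rw [Finset.sum_congr rfl fun p _ => Finset.sum_comm, Finset.sum_comm]
    refine Finset.sum_congr rfl fun σ _ => ?_
    rw [form_expand η, form_expand β, Finset.sum_mul_sum, Finset.sum_mul, Finset.mul_sum]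
    refine Finset.sum_congr rfl fun p _ => ?_
    rw [Finset.sum_mul, Finset.mul_sum]
    refine Finset.sum_congr rfl fun q _ => ?_
    ring
  have h2 : ∑ p : Fin 7 × Fin 7, ∑ q : Fin 7 × Fin 7,
        η ![e p.1, e p.2] * β ![e q.1, e q.2] * (cZ p.1 p.2 q.1 q.2 : ℝ) =
      6 * ((∑ i : Fin 7, (∑ p : Fin 7 × Fin 7, eps i p.1 p.2 * η ![e p.1, e p.2]) *
        (∑ q : Fin 7 × Fin 7, eps i q.1 q.2 * β ![e q.1, e q.2]))
        - 2 * ∑ p : Fin 7 × Fin 7, η ![e p.1, e p.2] * β ![e p.1, e p.2]) := by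
    have h3 : ∀ p : Fin 7 × Fin 7, ∑ q : Fin 7 × Fin 7, β ![e q.1, e q.2] *
        (if p.1 = q.1 then if p.2 = q.2 then (1 : ℝ) else 0 else 0) = β ![e p.1, e p.2] := by
      intro p
      rw [Fintype.sum_prod_type]
      simp
    have h4 : ∀ p : Fin 7 × Fin 7, ∑ q : Fin 7 × Fin 7, β ![e q.1, e q.2] *
        (if p.1 = q.2 then if p.2 = q.1 then (1 : ℝ) else 0 else 0) = - β ![e p.1, e p.2] := by
      intro p
      rw [Fintype.sum_prod_type, ← form_swap]
      simp
    have h5 : ∑ i : Fin 7, (∑ p : Fin 7 × Fin 7, eps i p.1 p.2 * η ![e p.1, e p.2]) *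
        (∑ q : Fin 7 × Fin 7, eps i q.1 q.2 * β ![e q.1, e q.2]) =
        ∑ p : Fin 7 × Fin 7, η ![e p.1, e p.2] * ∑ q : Fin 7 × Fin 7, β ![e q.1, e q.2] *
          ∑ i : Fin 7, eps i p.1 p.2 * eps i q.1 q.2 := by
      simp only [Finset.sum_mul_sum]
      simp only [Finset.mul_sum]
      rw [Finset.sum_comm]
      refine Finset.sum_congr rfl fun p _ => ?_
      rw [Finset.sum_comm]
      refine Finset.sum_congr rfl fun q _ => Finset.sum_congr rfl fun i _ => ?_
      ring
    rw [h5, Finset.mul_sum, ← Finset.sum_sub_distrib, Finset.mul_sum]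
    refine Finset.sum_congr rfl fun p _ => ?_
    have h6 : (2 : ℝ) * (η ![e p.1, e p.2] * β ![e p.1, e p.2]) =
      η ![e p.1, e p.2] * β ![e p.1, e p.2] - η ![e p.1, e p.2] * (- β ![e p.1, e p.2]) := by
      ring
    rw [h6, ← h4 p, ← h3 p, h3 p, ← h3 p, ← mul_sub, ← mul_sub, ← Finset.sum_sub_distrib,
      ← Finset.sum_sub_distrib, Finset.mul_sum, Finset.mul_sum]
    refine Finset.sum_congr rfl fun q _ => ?_
    rw [cZ_eq']
    ring
  simp only [← mul_assoc, ← Finset.sum_mul] at h1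
  rw [mul_assoc] at h1
  rw [h1, h2]
  simp only [Fintype.sum_prod_type]
  rw [pair_eq]
  ring

theorem vol_e : vol e = 1 := by
  have : (Matrix.of fun i j => e i j) = (1 : Matrix (Fin 7) (Fin 7) ℝ) := by
    ext i j
    simp [e, Matrix.one_apply, eq_comm]
  rw [vol, this, Matrix.det_one]

/-- an alternating 2-form `β` satisfies `Σ_{j,k} ε_{ijk} β(e_j,e_k) = 0` for
every `i` iff `η ∧ β ∧ φ = −⟨η,β⟩·vol` for every alternating 2-form `η`. -/
theorem mem_Lambda2_14_iff (β : AlternatingMap ℝ (Fin 7 → ℝ) ℝ (Fin 2)) :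
    (∀ i : Fin 7, ∑ j : Fin 7, ∑ k : Fin 7, eps i j k * β ![e j, e k] = 0) ↔
    (∀ η : AlternatingMap ℝ (Fin 7 → ℝ) ℝ (Fin 2), ∀ v : Fin 7 → (Fin 7 → ℝ),
      wedge223 (fun x y => η ![x, y]) (fun x y => β ![x, y]) phi v
        = -(∑ a : Fin 7, ∑ b : Fin 7,
              if a < b then η ![e a, e b] * β ![e a, e b] else 0) * vol v) := by
  constructor
  · intro h η v
    rw [wedge_key]
    simp [h]
  · intro h
    have h1 := h β e
    rw [wedge_key, vol_e] at h1
    have h2 : ∑ i : Fin 7, (∑ j : Fin 7, ∑ k : Fin 7, eps i j k * β ![e j, e k]) *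
        (∑ j : Fin 7, ∑ k : Fin 7, eps i j k * β ![e j, e k]) = 0 := by linarith
    rw [Finset.sum_eq_zero_iff_of_nonneg (fun i _ => mul_self_nonneg _)] at h2
    intro i
    exact mul_self_eq_zero.mp (h2 i (Finset.mem_univ i))

end G2

end
end

section
/- Every alternating 3-form γ on ℝ⁷ admits a unique decomposition γ = r·φ + v⌟ψ + i_φ(h), where r ∈ ℝ, v ∈ ℝ⁷, and h is a symmetric bilinear form on ℝ⁷ with trace Σ_{i=1}^{7} h(e_i,e_i) = 0. (This is the G₂-type decomposition Λ³ = Λ³₁ ⊕ Λ³₇ ⊕ Λ³₂₇.) -/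
open scoped BigOperators Matrix

noncomputable section

namespace G2

/-- Right hand side. -/
def R (r : ℝ) (v : Fin 7 → ℝ) (h : Fin 7 → Fin 7 → ℝ) (x y z : Fin 7 → ℝ) : ℝ :=
  r * phi x y z + psi v x y z + iphi h x y z

/-- `w3` as an alternating map. -/
def w3A (a b c : Fin 7) : AlternatingMap ℝ (Fin 7 → ℝ) ℝ (Fin 3) :=
  (Matrix.detRowAlternating (n := Fin 3) (R := ℝ)).compLinearMap (LinearMap.funLeft ℝ ℝ ![a, b, c])

lemma w3A_apply (a b c : Fin 7) (x y z : Fin 7 → ℝ) : w3A a b c ![x, y, z] = w3 a b c x y z := by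
  simp only [w3A, AlternatingMap.compLinearMap_apply]
  refine (Matrix.det_fin_three
    (Matrix.of fun i => LinearMap.funLeft ℝ ℝ ![a, b, c] (![x, y, z] i))).trans ?_
  simp [w3, LinearMap.funLeft]
  ring

lemma w4_eq (a b c d : Fin 7) (v x y z : Fin 7 → ℝ) : w4 a b c d v x y z =
    v a * w3 b c d x y z - v b * w3 a c d x y z + v c * w3 a b d x y z - v d * w3 a b c x y z := by
  simp [w4, w3, Matrix.det_succ_row_zero, Fin.sum_univ_succ, Fin.succAbove]
  ring

/-- `w4` contracted, as an alternating map. -/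
def w4A (v : Fin 7 → ℝ) (a b c d : Fin 7) : AlternatingMap ℝ (Fin 7 → ℝ) ℝ (Fin 3) :=
  v a • w3A b c d - v b • w3A a c d + v c • w3A a b d - v d • w3A a b c

lemma w4A_apply (a b c d : Fin 7) (v x y z : Fin 7 → ℝ) :
    w4A v a b c d ![x, y, z] = w4 a b c d v x y z := by
  simp [w4A, w4_eq, w3A_apply]

/-- The right hand side as an alternating map. -/
def RA (r : ℝ) (v : Fin 7 → ℝ) (h : Fin 7 → Fin 7 → ℝ) :
    AlternatingMap ℝ (Fin 7 → ℝ) ℝ (Fin 3) :=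
  r • (w3A 0 1 2 + w3A 0 3 4 + w3A 0 5 6 + w3A 1 3 5 - w3A 1 4 6 - w3A 2 3 6 - w3A 2 4 5)
  + (w4A v 3 4 5 6 + w4A v 1 2 5 6 + w4A v 1 2 3 4 + w4A v 0 2 4 6
    - w4A v 0 2 3 5 - w4A v 0 1 4 5 - w4A v 0 1 3 6)
  + ∑ i : Fin 7, ∑ j : Fin 7, ∑ k : Fin 7, ∑ l : Fin 7, (eps i k l * h i j) • w3A j k l

lemma altsum_apply (f : Fin 7 → AlternatingMap ℝ (Fin 7 → ℝ) ℝ (Fin 3)) (x : Fin 3 → Fin 7 → ℝ) :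
    (∑ i, f i) x = ∑ i, f i x := by
  simp only [Fin.sum_univ_seven, AlternatingMap.add_apply]

lemma RA_apply (r : ℝ) (v : Fin 7 → ℝ) (h : Fin 7 → Fin 7 → ℝ) (x y z : Fin 7 → ℝ) :
    RA r v h ![x, y, z] = R r v h x y z := by
  simp only [RA, R, phi, psi, iphi, AlternatingMap.add_apply, AlternatingMap.sub_apply,
    AlternatingMap.smul_apply, altsum_apply, w3A_apply, w4A_apply, smul_eq_mul]

lemma iphi_aux (i j : Fin 7) (x y z : Fin 7 → ℝ) :
    ∑ k : Fin 7, ∑ l : Fin 7, eps i k l * w3 j k l x y z =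
      2 * (x j * phi (e i) y z + y j * phi (e i) z x + z j * phi (e i) x y) := by
  fin_cases i <;> simp [Fin.sum_univ_seven, eps, phi, w3, e] <;> ring

lemma iphi_e (h : Fin 7 → Fin 7 → ℝ) (a b c : Fin 7) : iphi h (e a) (e b) (e c) =
    ∑ i : Fin 7, 2 * (h i a * eps i b c + h i b * eps i c a + h i c * eps i a b) := by
  unfold iphi
  refine Finset.sum_congr rfl fun i _ => ?_
  have : ∀ j : Fin 7, ∑ k : Fin 7, ∑ l : Fin 7, eps i k l * h i j * w3 j k l (e a) (e b) (e c)
      = (if j = a then 2 * h i j * eps i b c else 0) + (if j = b then 2 * h i j * eps i c a else 0)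
        + (if j = c then 2 * h i j * eps i a b else 0) := by
    intro j
    have h1 : ∑ k : Fin 7, ∑ l : Fin 7, eps i k l * h i j * w3 j k l (e a) (e b) (e c)
      = h i j * ∑ k : Fin 7, ∑ l : Fin 7, eps i k l * w3 j k l (e a) (e b) (e c) := by
      simp only [Finset.mul_sum]
      refine Finset.sum_congr rfl fun k _ => Finset.sum_congr rfl fun l _ => by ring
    rw [h1, iphi_aux]
    simp only [eps, show ∀ t : Fin 7, e t j = if j = t then 1 else 0 from fun t => rfl]
    split_ifs <;> ring
  simp only [this, Finset.sum_add_distrib, Finset.sum_ite_eq', Finset.mem_univ, if_true]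
  ring

set_option maxHeartbeats 4000000 in
lemma R_vals (r : ℝ) (v : Fin 7 → ℝ) (h : Fin 7 → Fin 7 → ℝ) (hs : ∀ i j, h i j = h j i) :
    R r v h (e 0) (e 1) (e 2) = r + 2 * h 0 0 + 2 * h 1 1 + 2 * h 2 2 ∧
    R r v h (e 0) (e 1) (e 3) = v 6 + 2 * h 0 5 - 2 * h 1 4 + 2 * h 2 3 ∧
    R r v h (e 0) (e 1) (e 4) = v 5 - 2 * h 0 6 + 2 * h 1 3 + 2 * h 2 4 ∧
    R r v h (e 0) (e 1) (e 5) = -v 4 - 2 * h 0 3 - 2 * h 1 6 + 2 * h 2 5 ∧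
    R r v h (e 0) (e 1) (e 6) = -v 3 + 2 * h 0 4 + 2 * h 1 5 + 2 * h 2 6 ∧
    R r v h (e 0) (e 2) (e 3) = v 5 - 2 * h 0 6 - 2 * h 1 3 - 2 * h 2 4 ∧
    R r v h (e 0) (e 2) (e 4) = -v 6 - 2 * h 0 5 - 2 * h 1 4 + 2 * h 2 3 ∧
    R r v h (e 0) (e 2) (e 5) = -v 3 + 2 * h 0 4 - 2 * h 1 5 - 2 * h 2 6 ∧
    R r v h (e 0) (e 2) (e 6) = v 4 + 2 * h 0 3 - 2 * h 1 6 + 2 * h 2 5 ∧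
    R r v h (e 0) (e 3) (e 4) = r + 2 * h 0 0 + 2 * h 3 3 + 2 * h 4 4 ∧
    R r v h (e 0) (e 3) (e 5) = v 2 + 2 * h 0 1 - 2 * h 3 6 + 2 * h 4 5 ∧
    R r v h (e 0) (e 3) (e 6) = v 1 - 2 * h 0 2 + 2 * h 3 5 + 2 * h 4 6 ∧
    R r v h (e 0) (e 4) (e 5) = v 1 - 2 * h 0 2 - 2 * h 3 5 - 2 * h 4 6 ∧
    R r v h (e 0) (e 4) (e 6) = -v 2 - 2 * h 0 1 - 2 * h 3 6 + 2 * h 4 5 ∧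
    R r v h (e 0) (e 5) (e 6) = r + 2 * h 0 0 + 2 * h 5 5 + 2 * h 6 6 ∧
    R r v h (e 1) (e 2) (e 3) = -v 4 + 2 * h 0 3 - 2 * h 1 6 - 2 * h 2 5 ∧
    R r v h (e 1) (e 2) (e 4) = v 3 + 2 * h 0 4 - 2 * h 1 5 + 2 * h 2 6 ∧
    R r v h (e 1) (e 2) (e 5) = -v 6 + 2 * h 0 5 + 2 * h 1 4 + 2 * h 2 3 ∧
    R r v h (e 1) (e 2) (e 6) = v 5 + 2 * h 0 6 + 2 * h 1 3 - 2 * h 2 4 ∧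
    R r v h (e 1) (e 3) (e 4) = -v 2 + 2 * h 0 1 + 2 * h 3 6 + 2 * h 4 5 ∧
    R r v h (e 1) (e 3) (e 5) = r + 2 * h 1 1 + 2 * h 3 3 + 2 * h 5 5 ∧
    R r v h (e 1) (e 3) (e 6) = -v 0 - 2 * h 1 2 - 2 * h 3 4 + 2 * h 5 6 ∧
    R r v h (e 1) (e 4) (e 5) = -v 0 - 2 * h 1 2 + 2 * h 3 4 - 2 * h 5 6 ∧
    R r v h (e 1) (e 4) (e 6) = -r - 2 * h 1 1 - 2 * h 4 4 - 2 * h 6 6 ∧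
    R r v h (e 1) (e 5) (e 6) = -v 2 + 2 * h 0 1 - 2 * h 3 6 - 2 * h 4 5 ∧
    R r v h (e 2) (e 3) (e 4) = v 1 + 2 * h 0 2 + 2 * h 3 5 - 2 * h 4 6 ∧
    R r v h (e 2) (e 3) (e 5) = -v 0 + 2 * h 1 2 - 2 * h 3 4 - 2 * h 5 6 ∧
    R r v h (e 2) (e 3) (e 6) = -r - 2 * h 2 2 - 2 * h 3 3 - 2 * h 6 6 ∧
    R r v h (e 2) (e 4) (e 5) = -r - 2 * h 2 2 - 2 * h 4 4 - 2 * h 5 5 ∧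
    R r v h (e 2) (e 4) (e 6) = v 0 - 2 * h 1 2 - 2 * h 3 4 - 2 * h 5 6 ∧
    R r v h (e 2) (e 5) (e 6) = v 1 + 2 * h 0 2 - 2 * h 3 5 + 2 * h 4 6 ∧
    R r v h (e 3) (e 4) (e 5) = -v 6 + 2 * h 0 5 - 2 * h 1 4 - 2 * h 2 3 ∧
    R r v h (e 3) (e 4) (e 6) = v 5 + 2 * h 0 6 - 2 * h 1 3 + 2 * h 2 4 ∧
    R r v h (e 3) (e 5) (e 6) = -v 4 + 2 * h 0 3 + 2 * h 1 6 + 2 * h 2 5 ∧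
    R r v h (e 4) (e 5) (e 6) = v 3 + 2 * h 0 4 + 2 * h 1 5 - 2 * h 2 6 := by
  simp only [R, iphi_e, psi, w4_eq, Fin.sum_univ_seven]
  refine ⟨?_, ?_, ?_, ?_, ?_, ?_, ?_, ?_, ?_, ?_, ?_, ?_, ?_, ?_, ?_, ?_, ?_, ?_, ?_, ?_, ?_, ?_, ?_, ?_, ?_, ?_, ?_, ?_, ?_, ?_, ?_, ?_, ?_, ?_, ?_⟩ <;>
  · simp [eps, phi, w3, e]
    try simp only [hs 1 0, hs 2 0, hs 2 1, hs 3 0, hs 3 1, hs 3 2, hs 4 0, hs 4 1, hs 4 2, hs 4 3, hs 5 0, hs 5 1, hs 5 2, hs 5 3, hs 5 4, hs 6 0, hs 6 1, hs 6 2, hs 6 3, hs 6 4, hs 6 5]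
    try ring

/-- Solution, scalar part. -/
def rS (G : Fin 7 → Fin 7 → Fin 7 → ℝ) : ℝ := 1/7 * G 0 1 2 + 1/7 * G 0 3 4 + 1/7 * G 0 5 6 + 1/7 * G 1 3 5 - 1/7 * G 1 4 6 - 1/7 * G 2 3 6 - 1/7 * G 2 4 5

/-- Solution, vector part. -/
def vS (G : Fin 7 → Fin 7 → Fin 7 → ℝ) : Fin 7 → ℝ := ![-1/4 * G 1 3 6 - 1/4 * G 1 4 5 - 1/4 * G 2 3 5 + 1/4 * G 2 4 6,
    1/4 * G 0 3 6 + 1/4 * G 0 4 5 + 1/4 * G 2 3 4 + 1/4 * G 2 5 6,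
    1/4 * G 0 3 5 - 1/4 * G 0 4 6 - 1/4 * G 1 3 4 - 1/4 * G 1 5 6,
    -1/4 * G 0 1 6 - 1/4 * G 0 2 5 + 1/4 * G 1 2 4 + 1/4 * G 4 5 6,
    -1/4 * G 0 1 5 + 1/4 * G 0 2 6 - 1/4 * G 1 2 3 - 1/4 * G 3 5 6,
    1/4 * G 0 1 4 + 1/4 * G 0 2 3 + 1/4 * G 1 2 6 + 1/4 * G 3 4 6,
    1/4 * G 0 1 3 - 1/4 * G 0 2 4 - 1/4 * G 1 2 5 - 1/4 * G 3 4 5]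

/-- Solution, symmetric part, upper triangle. -/
def hU (G : Fin 7 → Fin 7 → Fin 7 → ℝ) : Matrix (Fin 7) (Fin 7) ℝ := !![
    1/7 * G 0 1 2 + 1/7 * G 0 3 4 + 1/7 * G 0 5 6 - 3/28 * G 1 3 5 + 3/28 * G 1 4 6 + 3/28 * G 2 3 6 + 3/28 * G 2 4 5, 1/8 * G 0 3 5 - 1/8 * G 0 4 6 + 1/8 * G 1 3 4 + 1/8 * G 1 5 6, -1/8 * G 0 3 6 - 1/8 * G 0 4 5 + 1/8 * G 2 3 4 + 1/8 * G 2 5 6, -1/8 * G 0 1 5 + 1/8 * G 0 2 6 + 1/8 * G 1 2 3 + 1/8 * G 3 5 6, 1/8 * G 0 1 6 + 1/8 * G 0 2 5 + 1/8 * G 1 2 4 + 1/8 * G 4 5 6, 1/8 * G 0 1 3 - 1/8 * G 0 2 4 + 1/8 * G 1 2 5 + 1/8 * G 3 4 5, -1/8 * G 0 1 4 - 1/8 * G 0 2 3 + 1/8 * G 1 2 6 + 1/8 * G 3 4 6;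
    0, 1/7 * G 0 1 2 - 3/28 * G 0 3 4 - 3/28 * G 0 5 6 + 1/7 * G 1 3 5 - 1/7 * G 1 4 6 + 3/28 * G 2 3 6 + 3/28 * G 2 4 5, -1/8 * G 1 3 6 - 1/8 * G 1 4 5 + 1/8 * G 2 3 5 - 1/8 * G 2 4 6, 1/8 * G 0 1 4 - 1/8 * G 0 2 3 + 1/8 * G 1 2 6 - 1/8 * G 3 4 6, -1/8 * G 0 1 3 - 1/8 * G 0 2 4 + 1/8 * G 1 2 5 - 1/8 * G 3 4 5, 1/8 * G 0 1 6 - 1/8 * G 0 2 5 - 1/8 * G 1 2 4 + 1/8 * G 4 5 6, -1/8 * G 0 1 5 - 1/8 * G 0 2 6 - 1/8 * G 1 2 3 + 1/8 * G 3 5 6;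
    0, 0, 1/7 * G 0 1 2 - 3/28 * G 0 3 4 - 3/28 * G 0 5 6 - 3/28 * G 1 3 5 + 3/28 * G 1 4 6 - 1/7 * G 2 3 6 - 1/7 * G 2 4 5, 1/8 * G 0 1 3 + 1/8 * G 0 2 4 + 1/8 * G 1 2 5 - 1/8 * G 3 4 5, 1/8 * G 0 1 4 - 1/8 * G 0 2 3 - 1/8 * G 1 2 6 + 1/8 * G 3 4 6, 1/8 * G 0 1 5 + 1/8 * G 0 2 6 - 1/8 * G 1 2 3 + 1/8 * G 3 5 6, 1/8 * G 0 1 6 - 1/8 * G 0 2 5 + 1/8 * G 1 2 4 - 1/8 * G 4 5 6;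
    0, 0, 0, -3/28 * G 0 1 2 + 1/7 * G 0 3 4 - 3/28 * G 0 5 6 + 1/7 * G 1 3 5 + 3/28 * G 1 4 6 - 1/7 * G 2 3 6 + 3/28 * G 2 4 5, -1/8 * G 1 3 6 + 1/8 * G 1 4 5 - 1/8 * G 2 3 5 - 1/8 * G 2 4 6, 1/8 * G 0 3 6 - 1/8 * G 0 4 5 + 1/8 * G 2 3 4 - 1/8 * G 2 5 6, -1/8 * G 0 3 5 - 1/8 * G 0 4 6 + 1/8 * G 1 3 4 - 1/8 * G 1 5 6;
    0, 0, 0, 0, -3/28 * G 0 1 2 + 1/7 * G 0 3 4 - 3/28 * G 0 5 6 - 3/28 * G 1 3 5 - 1/7 * G 1 4 6 + 3/28 * G 2 3 6 - 1/7 * G 2 4 5, 1/8 * G 0 3 5 + 1/8 * G 0 4 6 + 1/8 * G 1 3 4 - 1/8 * G 1 5 6, 1/8 * G 0 3 6 - 1/8 * G 0 4 5 - 1/8 * G 2 3 4 + 1/8 * G 2 5 6;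
    0, 0, 0, 0, 0, -3/28 * G 0 1 2 - 3/28 * G 0 3 4 + 1/7 * G 0 5 6 + 1/7 * G 1 3 5 + 3/28 * G 1 4 6 + 3/28 * G 2 3 6 - 1/7 * G 2 4 5, 1/8 * G 1 3 6 - 1/8 * G 1 4 5 - 1/8 * G 2 3 5 - 1/8 * G 2 4 6;
    0, 0, 0, 0, 0, 0, -3/28 * G 0 1 2 - 3/28 * G 0 3 4 + 1/7 * G 0 5 6 - 3/28 * G 1 3 5 - 1/7 * G 1 4 6 - 1/7 * G 2 3 6 + 3/28 * G 2 4 5]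

/-- Solution, symmetric part. -/
def hS (G : Fin 7 → Fin 7 → Fin 7 → ℝ) (i j : Fin 7) : ℝ := hU G (min i j) (max i j)

lemma hS_symm (G : Fin 7 → Fin 7 → Fin 7 → ℝ) (i j : Fin 7) : hS G i j = hS G j i := by
  simp only [hS, min_comm, max_comm]

lemma hS_up (G : Fin 7 → Fin 7 → Fin 7 → ℝ) (i j : Fin 7) (hij : i ≤ j) : hS G i j = hU G i j := by
  simp only [hS, min_eq_left hij, max_eq_right hij]

lemma hS_trace (G : Fin 7 → Fin 7 → Fin 7 → ℝ) : ∑ i, hS G i i = 0 := by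
  simp [hS, hU, Fin.sum_univ_seven]
  ring

set_option maxHeartbeats 4000000 in
lemma solve (G : Fin 7 → Fin 7 → Fin 7 → ℝ) (r : ℝ) (v : Fin 7 → ℝ) (h : Fin 7 → Fin 7 → ℝ)
    (hs : ∀ i j, h i j = h j i) (ht : ∑ i, h i i = 0)
    (hR : ∀ a b c, G a b c = R r v h (e a) (e b) (e c)) :
    r = rS G ∧ v = vS G ∧ h = hS G := by
  obtain ⟨E012, E013, E014, E015, E016, E023, E024, E025, E026, E034, E035, E036, E045, E046, E056, E123, E124, E125, E126, E134, E135, E136, E145, E146, E156, E234, E235, E236, E245, E246, E256, E345, E346, E356, E456⟩ := R_vals r v h hs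
  simp only [← hR] at E012 E013 E014 E015 E016 E023 E024 E025 E026 E034 E035 E036 E045 E046 E056 E123 E124 E125 E126 E134 E135 E136 E145 E146 E156 E234 E235 E236 E245 E246 E256 E345 E346 E356 E456
  rw [Fin.sum_univ_seven] at ht
  refine ⟨?_, ?_, ?_⟩
  · unfold rS
    linarith
  · funext i
    fin_cases i
    · simp [vS]; linarith only [E136, E145, E235, E246]
    · simp [vS]; linarith only [E036, E045, E234, E256]
    · simp [vS]; linarith only [E035, E046, E134, E156]
    · simp [vS]; linarith only [E016, E025, E124, E456]
    · simp [vS]; linarith only [E015, E026, E123, E356]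
    · simp [vS]; linarith only [E014, E023, E126, E346]
    · simp [vS]; linarith only [E013, E024, E125, E345]
  · have key : ∀ i j, i ≤ j → h i j = hU G i j := by
      intro i j hij
      fin_cases i <;> fin_cases j <;> first | (exact absurd hij (by decide)) | skip
      · simp [hU]; linarith only [E012, E034, E056, E135, E146, E236, E245, ht]
      · simp [hU]; linarith only [E035, E046, E134, E156]
      · simp [hU]; linarith only [E036, E045, E234, E256]
      · simp [hU]; linarith only [E015, E026, E123, E356]
      · simp [hU]; linarith only [E016, E025, E124, E456]
      · simp [hU]; linarith only [E013, E024, E125, E345]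
      · simp [hU]; linarith only [E014, E023, E126, E346]
      · simp [hU]; linarith only [E012, E034, E056, E135, E146, E236, E245, ht]
      · simp [hU]; linarith only [E136, E145, E235, E246]
      · simp [hU]; linarith only [E014, E023, E126, E346]
      · simp [hU]; linarith only [E013, E024, E125, E345]
      · simp [hU]; linarith only [E016, E025, E124, E456]
      · simp [hU]; linarith only [E015, E026, E123, E356]
      · simp [hU]; linarith only [E012, E034, E056, E135, E146, E236, E245, ht]
      · simp [hU]; linarith only [E013, E024, E125, E345]
      · simp [hU]; linarith only [E014, E023, E126, E346]
      · simp [hU]; linarith only [E015, E026, E123, E356]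
      · simp [hU]; linarith only [E016, E025, E124, E456]
      · simp [hU]; linarith only [E012, E034, E056, E135, E146, E236, E245, ht]
      · simp [hU]; linarith only [E136, E145, E235, E246]
      · simp [hU]; linarith only [E036, E045, E234, E256]
      · simp [hU]; linarith only [E035, E046, E134, E156]
      · simp [hU]; linarith only [E012, E034, E056, E135, E146, E236, E245, ht]
      · simp [hU]; linarith only [E035, E046, E134, E156]
      · simp [hU]; linarith only [E036, E045, E234, E256]
      · simp [hU]; linarith only [E012, E034, E056, E135, E146, E236, E245, ht]
      · simp [hU]; linarith only [E136, E145, E235, E246]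
      · simp [hU]; linarith only [E012, E034, E056, E135, E146, E236, E245, ht]
    funext i j
    rcases le_total i j with hij | hij
    · rw [key i j hij, hS_up G i j hij]
    · rw [hs, key j i hij, hS_symm, hS_up G j i hij]

set_option maxHeartbeats 4000000 in
lemma exist (G : Fin 7 → Fin 7 → Fin 7 → ℝ) (a b c : Fin 7) (hab : a < b) (hbc : b < c) :
    R (rS G) (vS G) (hS G) (e a) (e b) (e c) = G a b c := by
  obtain ⟨E012, E013, E014, E015, E016, E023, E024, E025, E026, E034, E035, E036, E045, E046, E056, E123, E124, E125, E126, E134, E135, E136, E145, E146, E156, E234, E235, E236, E245, E246, E256, E345, E346, E356, E456⟩ := R_vals (rS G) (vS G) (hS G) (hS_symm G)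
  fin_cases a <;> fin_cases b <;> first | (exact absurd hab (by decide)) | skip
  all_goals (fin_cases c <;> first | (exact absurd hbc (by decide)) | skip)
  · refine E012.trans ?_; simp [rS, vS, hS, hU]; ring
  · refine E013.trans ?_; simp [rS, vS, hS, hU]; ring
  · refine E014.trans ?_; simp [rS, vS, hS, hU]; ring
  · refine E015.trans ?_; simp [rS, vS, hS, hU]; ring
  · refine E016.trans ?_; simp [rS, vS, hS, hU]; ring
  · refine E023.trans ?_; simp [rS, vS, hS, hU]; ring
  · refine E024.trans ?_; simp [rS, vS, hS, hU]; ring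
  · refine E025.trans ?_; simp [rS, vS, hS, hU]; ring
  · refine E026.trans ?_; simp [rS, vS, hS, hU]; ring
  · refine E034.trans ?_; simp [rS, vS, hS, hU]; ring
  · refine E035.trans ?_; simp [rS, vS, hS, hU]; ring
  · refine E036.trans ?_; simp [rS, vS, hS, hU]; ring
  · refine E045.trans ?_; simp [rS, vS, hS, hU]; ring
  · refine E046.trans ?_; simp [rS, vS, hS, hU]; ring
  · refine E056.trans ?_; simp [rS, vS, hS, hU]; ring
  · refine E123.trans ?_; simp [rS, vS, hS, hU]; ring
  · refine E124.trans ?_; simp [rS, vS, hS, hU]; ring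
  · refine E125.trans ?_; simp [rS, vS, hS, hU]; ring
  · refine E126.trans ?_; simp [rS, vS, hS, hU]; ring
  · refine E134.trans ?_; simp [rS, vS, hS, hU]; ring
  · refine E135.trans ?_; simp [rS, vS, hS, hU]; ring
  · refine E136.trans ?_; simp [rS, vS, hS, hU]; ring
  · refine E145.trans ?_; simp [rS, vS, hS, hU]; ring
  · refine E146.trans ?_; simp [rS, vS, hS, hU]; ring
  · refine E156.trans ?_; simp [rS, vS, hS, hU]; ring
  · refine E234.trans ?_; simp [rS, vS, hS, hU]; ring
  · refine E235.trans ?_; simp [rS, vS, hS, hU]; ring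
  · refine E236.trans ?_; simp [rS, vS, hS, hU]; ring
  · refine E245.trans ?_; simp [rS, vS, hS, hU]; ring
  · refine E246.trans ?_; simp [rS, vS, hS, hU]; ring
  · refine E256.trans ?_; simp [rS, vS, hS, hU]; ring
  · refine E345.trans ?_; simp [rS, vS, hS, hU]; ring
  · refine E346.trans ?_; simp [rS, vS, hS, hU]; ring
  · refine E356.trans ?_; simp [rS, vS, hS, hU]; ring
  · refine E456.trans ?_; simp [rS, vS, hS, hU]; ring

lemma alt_ext (f g : AlternatingMap ℝ (Fin 7 → ℝ) ℝ (Fin 3))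
    (H : ∀ a b c : Fin 7, a < b → b < c → f ![e a, e b, e c] = g ![e a, e b, e c]) : f = g := by
  have s1 : ∀ (f : AlternatingMap ℝ (Fin 7 → ℝ) ℝ (Fin 3)) (x y z : Fin 7 → ℝ),
      f ![y, x, z] = - f ![x, y, z] := by
    intro f x y z
    rw [← f.map_swap ![x, y, z] (show (0 : Fin 3) ≠ 1 by decide)]
    congr 1
    funext i
    fin_cases i <;> rfl
  have s2 : ∀ (f : AlternatingMap ℝ (Fin 7 → ℝ) ℝ (Fin 3)) (x y z : Fin 7 → ℝ),
      f ![x, z, y] = - f ![x, y, z] := by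
    intro f x y z
    rw [← f.map_swap ![x, y, z] (show (1 : Fin 3) ≠ 2 by decide)]
    congr 1
    funext i
    fin_cases i <;> rfl
  have H2 : ∀ a b c : Fin 7, a < b → a ≠ c → b ≠ c → f ![e a, e b, e c] = g ![e a, e b, e c] := by
    intro a b c hab hac hbc
    rcases lt_or_gt_of_ne hbc with h | h
    · exact H a b c hab h
    · rw [s2 f, s2 g]
      rcases lt_or_gt_of_ne hac with h' | h'
      · rw [H a c b h' h]
      · rw [s1 f, s1 g, H c a b h' hab]
  refine Module.Basis.ext_alternating (Pi.basisFun ℝ (Fin 7)) fun v hv => ?_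
  have hve : (fun i => Pi.basisFun ℝ (Fin 7) (v i)) = ![e (v 0), e (v 1), e (v 2)] := by
    funext i j
    fin_cases i <;> simp [e, Pi.single_apply]
  have h01 : v 0 ≠ v 1 := fun h => absurd (hv h) (by decide)
  have h02 : v 0 ≠ v 2 := fun h => absurd (hv h) (by decide)
  have h12 : v 1 ≠ v 2 := fun h => absurd (hv h) (by decide)
  rw [hve]
  rcases lt_or_gt_of_ne h01 with h | h
  · exact H2 _ _ _ h h02 h12
  · rw [s1 f, s1 g, H2 _ _ _ h h12 h02]

/-- every alternating 3-form `γ` on `ℝ⁷` decomposes uniquely as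
`γ = r·φ + v⌟ψ + i_φ(h)` with `r ∈ ℝ`, `v ∈ ℝ⁷`, and `h` a symmetric bilinear form
(given by its matrix of coefficients `h_{ij} = h(e_i,e_j)`) of trace zero. -/
theorem threeForm_decomposition (γ : AlternatingMap ℝ (Fin 7 → ℝ) ℝ (Fin 3)) :
    ∃! p : ℝ × (Fin 7 → ℝ) × (Fin 7 → Fin 7 → ℝ),
      (∀ i j : Fin 7, p.2.2 i j = p.2.2 j i) ∧
      (∑ i : Fin 7, p.2.2 i i = 0) ∧
      (∀ x y z : Fin 7 → ℝ,
        γ ![x, y, z] = p.1 * phi x y z + psi p.2.1 x y z + iphi p.2.2 x y z) := by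
  set G : Fin 7 → Fin 7 → Fin 7 → ℝ := fun a b c => γ ![e a, e b, e c] with hG
  have hγ : γ = RA (rS G) (vS G) (hS G) := by
    refine alt_ext _ _ fun a b c hab hbc => ?_
    rw [RA_apply, exist G a b c hab hbc]
  refine ⟨(rS G, vS G, hS G), ⟨hS_symm G, hS_trace G, fun x y z => ?_⟩, ?_⟩
  · change γ ![x, y, z] = R (rS G) (vS G) (hS G) x y z
    rw [← RA_apply, ← hγ]
  · rintro ⟨r, v, h⟩ ⟨h1, h2, h3⟩
    obtain ⟨a, b, c⟩ := solve G r v h h1 h2 fun a b c => h3 (e a) (e b) (e c)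
    rw [a, b, c]

end G2

end
end

section
/- Let β be an alternating 2-form on ℝ⁷ satisfying Σ_{j,k=1}^{7} ε_{ijk} β(e_j,e_k) = 0 for every i ∈ {1,…,7}. Then |β∧β|² = |β|⁴, where |β|² := Σ_{a<b} β(e_a,e_b)² and |β∧β|² := Σ_{a<b<c<d} (β∧β)(e_a,e_b,e_c,e_d)². -/
open scoped BigOperators Matrix

noncomputable section

namespace G2

theorem poly_id (B01 B02 B03 B04 B05 B06 B12 B13 B14 B15 B16 B23 B24 B25 B26 B34 B35 B36 B45 B46 B56 : ℝ)
    (h12 : B12 = -B34-B56) (h02 : B02 = B35-B46) (h01 : B01 = B36+B45) (h04 : B04 = B26-B15) (h03 : B03 = -B16-B25) (h06 : B06 = B13-B24) (h05 : B05 = B14+B23) :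
    (2*(B01*B23-B02*B13+B03*B12))^2
    + (2*(B01*B24-B02*B14+B04*B12))^2
    + (2*(B01*B25-B02*B15+B05*B12))^2
    + (2*(B01*B26-B02*B16+B06*B12))^2
    + (2*(B01*B34-B03*B14+B04*B13))^2
    + (2*(B01*B35-B03*B15+B05*B13))^2
    + (2*(B01*B36-B03*B16+B06*B13))^2
    + (2*(B01*B45-B04*B15+B05*B14))^2
    + (2*(B01*B46-B04*B16+B06*B14))^2
    + (2*(B01*B56-B05*B16+B06*B15))^2
    + (2*(B02*B34-B03*B24+B04*B23))^2
    + (2*(B02*B35-B03*B25+B05*B23))^2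
    + (2*(B02*B36-B03*B26+B06*B23))^2
    + (2*(B02*B45-B04*B25+B05*B24))^2
    + (2*(B02*B46-B04*B26+B06*B24))^2
    + (2*(B02*B56-B05*B26+B06*B25))^2
    + (2*(B03*B45-B04*B35+B05*B34))^2
    + (2*(B03*B46-B04*B36+B06*B34))^2
    + (2*(B03*B56-B05*B36+B06*B35))^2
    + (2*(B04*B56-B05*B46+B06*B45))^2
    + (2*(B12*B34-B13*B24+B14*B23))^2
    + (2*(B12*B35-B13*B25+B15*B23))^2
    + (2*(B12*B36-B13*B26+B16*B23))^2
    + (2*(B12*B45-B14*B25+B15*B24))^2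
    + (2*(B12*B46-B14*B26+B16*B24))^2
    + (2*(B12*B56-B15*B26+B16*B25))^2
    + (2*(B13*B45-B14*B35+B15*B34))^2
    + (2*(B13*B46-B14*B36+B16*B34))^2
    + (2*(B13*B56-B15*B36+B16*B35))^2
    + (2*(B14*B56-B15*B46+B16*B45))^2
    + (2*(B23*B45-B24*B35+B25*B34))^2
    + (2*(B23*B46-B24*B36+B26*B34))^2
    + (2*(B23*B56-B25*B36+B26*B35))^2
    + (2*(B24*B56-B25*B46+B26*B45))^2
    + (2*(B34*B56-B35*B46+B36*B45))^2
    = (B01^2 + B02^2 + B03^2 + B04^2 + B05^2 + B06^2 + B12^2 + B13^2 + B14^2 + B15^2 + B16^2 + B23^2 + B24^2 + B25^2 + B26^2 + B34^2 + B35^2 + B36^2 + B45^2 + B46^2 + B56^2)^2 := by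
  subst h12 h02 h01 h04 h03 h06 h05
  ring

theorem wedge_expand (B : Fin 7 → Fin 7 → ℝ) (β : AlternatingMap ℝ (Fin 7 → ℝ) ℝ (Fin 2))
    (hB : ∀ i j, β ![e i, e j] = B i j) (hs : ∀ i j, B i j = - B j i) (a b c d : Fin 7) :
    wedge22 (fun x y => β ![x, y]) (fun x y => β ![x, y]) ![e a, e b, e c, e d]
      = 2 * (B a b * B c d - B a c * B b d + B a d * B b c) := by
  have hw : ∀ f : Equiv.Perm (Fin 4) → ℝ, ∑ σ, f σ =
      ∑ p : Fin 4, ∑ q : Fin 3, ∑ r : Fin 2,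
        f (Equiv.Perm.decomposeFin.symm (p, Equiv.Perm.decomposeFin.symm
          (q, Equiv.Perm.decomposeFin.symm (r, 1)))) := by
    intro f
    rw [← Equiv.sum_comp Equiv.Perm.decomposeFin.symm, Fintype.sum_prod_type]
    refine Finset.sum_congr rfl fun p _ => ?_
    rw [← Equiv.sum_comp Equiv.Perm.decomposeFin.symm, Fintype.sum_prod_type]
    refine Finset.sum_congr rfl fun q _ => ?_
    rw [← Equiv.sum_comp Equiv.Perm.decomposeFin.symm, Fintype.sum_prod_type]
    refine Finset.sum_congr rfl fun r _ => ?_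
    rw [Fintype.sum_unique]
    congr
  have key : ∀ σ : Equiv.Perm (Fin 4), β ![![e a, e b, e c, e d] (σ 0), ![e a, e b, e c, e d] (σ 1)]
      * β ![![e a, e b, e c, e d] (σ 2), ![e a, e b, e c, e d] (σ 3)]
      = B (![a,b,c,d] (σ 0)) (![a,b,c,d] (σ 1)) * B (![a,b,c,d] (σ 2)) (![a,b,c,d] (σ 3)) := by
    intro σ
    have : ∀ t, ![e a, e b, e c, e d] t = e (![a,b,c,d] t) := by
      intro t; fin_cases t <;> rfl
    simp only [this, hB]
  unfold wedge22
  simp only [key]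
  have E : ∀ (p : Fin 4) (q : Fin 3) (r : Fin 2), ∀ σ : Equiv.Perm (Fin 4), σ = (Equiv.Perm.decomposeFin.symm (p, Equiv.Perm.decomposeFin.symm
          (q, Equiv.Perm.decomposeFin.symm (r, (1 : Equiv.Perm (Fin 1))))) : Equiv.Perm (Fin 4)) →
      σ 0 = p ∧ σ 1 = Equiv.swap 0 p q.succ ∧
      σ 2 = Equiv.swap 0 p (Equiv.swap 0 q r.succ).succ ∧
      σ 3 = Equiv.swap 0 p (Equiv.swap 0 q (Equiv.swap 0 r 1).succ).succ := by
    rintro p q r _ rfl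
    revert p q r
    decide
  have V : ∀ p q r,
      (((Equiv.Perm.sign (Equiv.Perm.decomposeFin.symm (p, Equiv.Perm.decomposeFin.symm
          (q, Equiv.Perm.decomposeFin.symm (r, (1 : Equiv.Perm (Fin 1))))) : Equiv.Perm (Fin 4)) : ℤ))) =
      (if p = 0 then 1 else -1) * (if q = 0 then 1 else -1) * (if r = 0 then 1 else -1) := by
    intro p q r
    simp only [Equiv.Perm.decomposeFin.symm_sign, Equiv.Perm.sign_one]
    fin_cases p <;> fin_cases q <;> fin_cases r <;> simp
  rw [hw]
  simp only [V, (E _ _ _ _ rfl).1, (E _ _ _ _ rfl).2.1, (E _ _ _ _ rfl).2.2.1, (E _ _ _ _ rfl).2.2.2]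
  simp [Fin.sum_univ_succ, Equiv.swap_apply_def]
  simp only [hs b a, hs c a, hs d a, hs c b, hs d b, hs d c]
  ring

theorem hyp_expand (B : Fin 7 → Fin 7 → ℝ) (hs : ∀ i j, B i j = - B j i)
    (h : ∀ i : Fin 7, ∑ j : Fin 7, ∑ k : Fin 7, eps i j k * B j k = 0) :
    B 1 2 = -B 3 4-B 5 6 ∧ B 0 2 = B 3 5-B 4 6 ∧ B 0 1 = B 3 6+B 4 5 ∧ B 0 4 = B 2 6-B 1 5 ∧ B 0 3 = -B 1 6-B 2 5 ∧ B 0 6 = B 1 3-B 2 4 ∧ B 0 5 = B 1 4+B 2 3 := by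
  refine ⟨?_, ?_, ?_, ?_, ?_, ?_, ?_⟩
  · have := h 0
    simp [Fin.sum_univ_seven, eps, phi, w3, e] at this
    linarith [hs 2 1, hs 4 3, hs 6 5]
  · have := h 1
    simp [Fin.sum_univ_seven, eps, phi, w3, e] at this
    linarith [hs 2 0, hs 5 3, hs 6 4]
  · have := h 2
    simp [Fin.sum_univ_seven, eps, phi, w3, e] at this
    linarith [hs 1 0, hs 6 3, hs 5 4]
  · have := h 3
    simp [Fin.sum_univ_seven, eps, phi, w3, e] at this
    linarith [hs 4 0, hs 5 1, hs 6 2]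
  · have := h 4
    simp [Fin.sum_univ_seven, eps, phi, w3, e] at this
    linarith [hs 3 0, hs 6 1, hs 5 2]
  · have := h 5
    simp [Fin.sum_univ_seven, eps, phi, w3, e] at this
    linarith [hs 6 0, hs 3 1, hs 4 2]
  · have := h 6
    simp [Fin.sum_univ_seven, eps, phi, w3, e] at this
    linarith [hs 5 0, hs 4 1, hs 3 2]

/-- for `β` in `Λ²₁₄`, `|β∧β|² = |β|⁴`. -/
theorem wedge_sq_norm (β : AlternatingMap ℝ (Fin 7 → ℝ) ℝ (Fin 2))
    (hβ : ∀ i : Fin 7, ∑ j : Fin 7, ∑ k : Fin 7, eps i j k * β ![e j, e k] = 0) :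
    (∑ a : Fin 7, ∑ b : Fin 7, ∑ c : Fin 7, ∑ d : Fin 7,
        if a < b ∧ b < c ∧ c < d then
          (wedge22 (fun x y => β ![x, y]) (fun x y => β ![x, y]) ![e a, e b, e c, e d]) ^ 2
        else 0)
      = (∑ a : Fin 7, ∑ b : Fin 7, if a < b then (β ![e a, e b]) ^ 2 else 0) ^ 2 := by
  obtain ⟨B, hB⟩ : ∃ B : Fin 7 → Fin 7 → ℝ, ∀ i j, β ![e i, e j] = B i j := ⟨_, fun _ _ => rfl⟩
  have hs : ∀ i j, B i j = - B j i := by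
    intro i j
    rw [← hB, ← hB, ← AlternatingMap.map_swap β ![e j, e i] (show (0 : Fin 2) ≠ 1 by decide)]
    congr 1
    ext t
    fin_cases t <;> rfl
  simp only [wedge_expand B β hB hs]
  simp only [hB] at hβ ⊢
  obtain ⟨h1, h2, h3, h4, h5, h6, h7⟩ := hyp_expand B hs hβ
  have := poly_id (B 0 1) (B 0 2) (B 0 3) (B 0 4) (B 0 5) (B 0 6) (B 1 2) (B 1 3) (B 1 4) (B 1 5) (B 1 6) (B 2 3) (B 2 4) (B 2 5) (B 2 6) (B 3 4) (B 3 5) (B 3 6) (B 4 5) (B 4 6) (B 5 6) h1 h2 h3 h4 h5 h6 h7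
  have L2 : (∑ a : Fin 7, ∑ b : Fin 7, if a < b then (B a b) ^ 2 else 0) = B 0 1^2 + B 0 2^2 + B 0 3^2 + B 0 4^2 + B 0 5^2 + B 0 6^2 + B 1 2^2 + B 1 3^2 + B 1 4^2 + B 1 5^2 + B 1 6^2 + B 2 3^2 + B 2 4^2 + B 2 5^2 + B 2 6^2 + B 3 4^2 + B 3 5^2 + B 3 6^2 + B 4 5^2 + B 4 6^2 + B 5 6^2 := by
    simp [Fin.sum_univ_seven]
    try ring
  rw [L2, ← this]
  have L4 : ∀ f : Fin 7 → Fin 7 → Fin 7 → Fin 7 → ℝ, (∑ a : Fin 7, ∑ b : Fin 7, ∑ c : Fin 7, ∑ d : Fin 7,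
      if a < b ∧ b < c ∧ c < d then f a b c d else 0) = f 0 1 2 3 + f 0 1 2 4 + f 0 1 2 5 + f 0 1 2 6 + f 0 1 3 4 + f 0 1 3 5 + f 0 1 3 6 + f 0 1 4 5 + f 0 1 4 6 + f 0 1 5 6 + f 0 2 3 4 + f 0 2 3 5 + f 0 2 3 6 + f 0 2 4 5 + f 0 2 4 6 + f 0 2 5 6 + f 0 3 4 5 + f 0 3 4 6 + f 0 3 5 6 + f 0 4 5 6 + f 1 2 3 4 + f 1 2 3 5 + f 1 2 3 6 + f 1 2 4 5 + f 1 2 4 6 + f 1 2 5 6 + f 1 3 4 5 + f 1 3 4 6 + f 1 3 5 6 + f 1 4 5 6 + f 2 3 4 5 + f 2 3 4 6 + f 2 3 5 6 + f 2 4 5 6 + f 3 4 5 6 := by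
    intro f
    simp [Fin.sum_univ_seven]
    try ring
  rw [L4 (fun a b c d => (2 * (B a b * B c d - B a c * B b d + B a d * B b c)) ^ 2)]

end G2

end
end
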